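/- arXiv:2308.16731 — 6 statements merged into one kernel-verified Lean document; each statement's English description precedes it below -/
import Mathlib

section
/- (Truncated moment problem on [-1,1]; one-dimensional case of Proposition 2.1.) Let d ≥ 1 and let μ = (μ_0, …, μ_{2d}) ∈ ℝ^{2d+1} satisfy μ_0 = 1, 𝓜_d(μ) is PSD, and 𝓜_{d−1}(μ; 1−x²) is PSD. Then there exists a Borel probability measure ν on ℝ with ν([-1,1]) = 1 such that ∫ x^k dν(x) = μ_k for all 0 ≤ k ≤ d. -/
open MeasureTheory

/-- The degree-`d` moment matrix `𝓜_d(μ)` with entries `μ (m+n)`. -/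
noncomputable def momentMatrix (d : ℕ) (μ : ℕ → ℝ) : Matrix (Fin (d+1)) (Fin (d+1)) ℝ :=
  fun m n => μ (m.1 + n.1)

/-- The localized moment matrix `𝓜_{d-1}(μ; 1 - x²)` with entries `μ (m+n) - μ (m+n+2)`. -/
noncomputable def locMomentMatrix (d : ℕ) (μ : ℕ → ℝ) : Matrix (Fin d) (Fin d) ℝ :=
  fun m n => μ (m.1 + n.1) - μ (m.1 + n.1 + 2)

/-- The spectral measure of a symmetric contraction `A` at a unit vector `w`: a probability measure
on `[-1,1]` whose moments are `⟪w, A ^ k w⟫`. -/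
theorem exists_measure_integral_pow_eq_inner {W : Type*} [NormedAddCommGroup W]
    [InnerProductSpace ℝ W] [FiniteDimensional ℝ W] (A : W →ₗ[ℝ] W) (hA : A.IsSymmetric)
    (hnorm : ∀ x, ‖A x‖ ≤ ‖x‖) (w : W) (hw : ‖w‖ = 1) :
    ∃ ν : Measure ℝ, IsProbabilityMeasure ν ∧ ν (Set.Icc (-1 : ℝ) 1) = 1 ∧
      ∀ k : ℕ, ∫ x, x ^ k ∂ν = inner ℝ w ((A ^ k) w) := by
  classical
  set b := hA.eigenvectorBasis rfl
  set l := hA.eigenvalues rfl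
  have hAb (i) : A (b i) = l i • b i := hA.apply_eigenvectorBasis rfl i
  have hl_mem (i) : l i ∈ Set.Icc (-1 : ℝ) 1 := by
    have h := hnorm (b i)
    rw [hAb, norm_smul, b.norm_eq_one, mul_one, Real.norm_eq_abs] at h
    exact abs_le.mp h
  have hpow (k : ℕ) (i) : (A ^ k) (b i) = l i ^ k • b i := by
    induction k with
    | zero => simp
    | succ k ih => rw [pow_succ', Module.End.mul_apply, ih, map_smul, hAb, smul_smul, pow_succ]
  have hmoment (k : ℕ) : inner ℝ w ((A ^ k) w) = ∑ i, inner ℝ (b i) w ^ 2 * l i ^ k := by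
    conv_lhs => rw [← b.sum_repr w, map_sum]
    rw [b.sum_repr, inner_sum]
    refine Finset.sum_congr rfl fun i _ => ?_
    rw [map_smul, hpow, inner_smul_right, inner_smul_right, b.repr_apply_apply,
      real_inner_comm (b i) w]
    ring
  have hmass : ∑ i, inner ℝ (b i) w ^ 2 = 1 := by
    simpa [hw] using (hmoment 0).symm
  have hmassE : ∑ i, ENNReal.ofReal (inner ℝ (b i) w ^ 2) = 1 := by
    rw [← ENNReal.ofReal_sum_of_nonneg fun i _ => sq_nonneg _, hmass, ENNReal.ofReal_one]
  refine ⟨∑ i, ENNReal.ofReal (inner ℝ (b i) w ^ 2) • Measure.dirac (l i), ⟨?_⟩, ?_, fun k => ?_⟩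
  · simpa using hmassE
  · simpa [Measure.dirac_apply' _ measurableSet_Icc, Set.indicator_of_mem (hl_mem _)] using hmassE
  · rw [hmoment, integral_finsetSum_measure]
    · refine Finset.sum_congr rfl fun i _ => ?_
      rw [integral_smul_measure, integral_dirac, ENNReal.toReal_ofReal (sq_nonneg _), smul_eq_mul]
    · exact fun i _ => (integrable_dirac (by simp)).smul_measure ENNReal.ofReal_ne_top

open scoped MatrixOrder in
/-- A positive semidefinite moment matrix is a Gram matrix. -/
theorem exists_inner_eq_of_momentMatrix_posSemidef {d : ℕ} {μ : ℕ → ℝ}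
    (hM : (momentMatrix d μ).PosSemidef) :
    ∃ v : ℕ → EuclideanSpace ℝ (Fin (d + 1)),
      ∀ m n, m ≤ d → n ≤ d → inner ℝ (v m) (v n) = μ (m + n) := by
  obtain ⟨B, hB⟩ := CStarAlgebra.nonneg_iff_eq_star_mul_self.mp hM.nonneg
  refine ⟨fun n => WithLp.toLp 2 fun i => B i (Fin.ofNat (d + 1) n), fun m n hm hn => ?_⟩
  have h := congrFun (congrFun hB (Fin.ofNat (d + 1) m)) (Fin.ofNat (d + 1) n)
  simp only [momentMatrix, Fin.val_ofNat, Nat.mod_eq_of_lt (Nat.lt_succ_of_le hm),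
    Nat.mod_eq_of_lt (Nat.lt_succ_of_le hn), Matrix.mul_apply, Matrix.star_apply,
    star_trivial] at h
  rw [h]
  simp [PiLp.inner_apply, mul_comm]

/-- The compressed shift: if the Gram matrix of `v 0, …, v d` is Hankel and the shift
`v i ↦ v (i + 1)` is contractive, then its compression to `span {v 0, …, v (d - 1)}` is a symmetric
contraction whose powers at `v 0` represent the moments up to degree `d`. -/
theorem exists_symmetric_contraction {E : Type*} [NormedAddCommGroup E] [InnerProductSpace ℝ E]
    [FiniteDimensional ℝ E] {d : ℕ} (hd : 1 ≤ d) {μ : ℕ → ℝ} {v : ℕ → E}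
    (hv : ∀ m n, m ≤ d → n ≤ d → inner ℝ (v m) (v n) = μ (m + n))
    (hshift : ∀ c : Fin d → ℝ, ‖∑ i, c i • v (i + 1)‖ ≤ ‖∑ i, c i • v i‖) :
    ∃ (W : Submodule ℝ E) (A : W →ₗ[ℝ] W) (w : W), A.IsSymmetric ∧ (∀ x, ‖A x‖ ≤ ‖x‖) ∧
      ∀ k ≤ d, inner ℝ w ((A ^ k) w) = μ k := by
  set S : (Fin d → ℝ) →ₗ[ℝ] E := Fintype.linearCombination ℝ fun i : Fin d => v i
  set T : (Fin d → ℝ) →ₗ[ℝ] E := Fintype.linearCombination ℝ fun i : Fin d => v (i + 1)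
  have hTS (c) : ‖T c‖ ≤ ‖S c‖ := hshift c
  set W := LinearMap.range S
  obtain ⟨R, hR⟩ := S.rangeRestrict.exists_rightInverse_of_surjective S.range_rangeRestrict
  have hSR (x : W) : S (R x) = x := congrArg Subtype.val (LinearMap.congr_fun hR x)
  set P : E →ₗ[ℝ] W := W.orthogonalProjectionOnto.toLinearMap
  have hP_inner (x : E) (y : W) : inner ℝ (P x) y = inner ℝ x (y : E) :=
    Submodule.inner_orthogonalProjectionOnto_eq_of_mem_right y x
  set A : W →ₗ[ℝ] W := P ∘ₗ T ∘ₗ R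
  have hmem (i : ℕ) (hi : i < d) : v i = S (Pi.single ⟨i, hi⟩ 1) := by
    simp [S, Fintype.linearCombination_apply_single]
  have hTsingle (i : ℕ) (hi : i < d) : T (Pi.single ⟨i, hi⟩ 1) = v (i + 1) := by
    simp [T, Fintype.linearCombination_apply_single]
  have hA_S (c : Fin d → ℝ) (x : W) (hx : (x : E) = S c) : A x = P (T c) := by
    have h : T (R x - c) = 0 := by
      rw [← norm_le_zero_iff]
      refine (hTS _).trans_eq ?_
      rw [map_sub, hSR, hx, sub_self, norm_zero]
    rw [map_sub, sub_eq_zero] at h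
    exact congrArg P h
  have hPv (i : ℕ) (hi : i < d) : ((P (v i) : W) : E) = v i :=
    Submodule.starProjection_eq_self_iff.mpr (hmem i hi ▸ LinearMap.mem_range_self S _)
  have hT_S (a c : Fin d → ℝ) : inner ℝ (T a) (S c) = inner ℝ (S a) (T c) := by
    simp only [S, T, Fintype.linearCombination_apply, sum_inner, inner_sum, inner_smul_left,
      inner_smul_right, Finset.mul_sum]
    refine Finset.sum_congr rfl fun i _ => Finset.sum_congr rfl fun j _ => ?_
    rw [hv _ _ (by omega) (by omega), hv _ _ (by omega) (by omega)]
    ring_nf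
  have hpow (k : ℕ) (hk : k ≤ d) : (A ^ k) (P (v 0)) = P (v k) := by
    induction k with
    | zero => simp
    | succ k ih =>
      rw [pow_succ', Module.End.mul_apply, ih (by omega),
        hA_S (Pi.single ⟨k, hk⟩ 1) _ ((hPv k hk).trans (hmem k hk)), hTsingle]
  refine ⟨W, A, P (v 0), fun x y => ?_, fun x => ?_, fun k hk => ?_⟩
  · rw [real_inner_comm (A y) x]
    simp only [A, LinearMap.comp_apply, hP_inner]
    rw [real_inner_comm (x : E)]
    simpa only [hSR] using hT_S (R x) (R y)
  · calc ‖A x‖ ≤ ‖T (R x)‖ := W.norm_orthogonalProjectionOnto_apply_le _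
      _ ≤ ‖S (R x)‖ := hTS _
      _ = ‖x‖ := by rw [hSR, Submodule.coe_norm]
  · rw [hpow k hk, real_inner_comm, hP_inner, hPv 0 hd, hv k 0 hk (by omega), add_zero]

/-- Positivity of the localized moment matrix makes the shift contractive. -/
theorem norm_sum_smul_succ_le {E : Type*} [NormedAddCommGroup E] [InnerProductSpace ℝ E] {d : ℕ}
    {μ : ℕ → ℝ} {v : ℕ → E} (hv : ∀ m n, m ≤ d → n ≤ d → inner ℝ (v m) (v n) = μ (m + n))
    (hM' : (locMomentMatrix d μ).PosSemidef) (c : Fin d → ℝ) :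
    ‖∑ i, c i • v (i + 1)‖ ≤ ‖∑ i, c i • v i‖ := by
  rw [← sq_le_sq₀ (norm_nonneg _) (norm_nonneg _), ← real_inner_self_eq_norm_sq,
    ← real_inner_self_eq_norm_sq, ← sub_nonneg]
  refine (hM'.dotProduct_mulVec_nonneg c).trans_eq ?_
  simp only [sum_inner, inner_sum, inner_smul_left, inner_smul_right, dotProduct, Matrix.mulVec,
    ← Finset.sum_sub_distrib, Finset.mul_sum, locMomentMatrix]
  refine Finset.sum_congr rfl fun i _ => Finset.sum_congr rfl fun j _ => ?_
  rw [hv _ _ (by omega) (by omega), hv _ _ (by omega) (by omega),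
    show (j : ℕ) + 1 + (i + 1) = i + j + 2 by ring, add_comm (j : ℕ) i, Pi.star_apply, star_trivial,
    conj_trivial]
  ring

/-- Truncated moment problem on `[-1,1]` (one-dimensional case of Proposition 2.1):
if `μ₀ = 1`, `𝓜_d(μ)` is PSD and `𝓜_{d-1}(μ; 1-x²)` is PSD, then there is a Borel
probability measure `ν` on `ℝ` with `ν [-1,1] = 1` whose moments up to degree `d`
agree with `μ`. -/
theorem statement0 (d : ℕ) (hd : 1 ≤ d) (μ : ℕ → ℝ) (h0 : μ 0 = 1)
    (hM : (momentMatrix d μ).PosSemidef) (hM' : (locMomentMatrix d μ).PosSemidef) :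
    ∃ ν : Measure ℝ, IsProbabilityMeasure ν ∧ ν (Set.Icc (-1 : ℝ) 1) = 1 ∧
      ∀ k : ℕ, k ≤ d → ∫ x, x ^ k ∂ν = μ k := by
  obtain ⟨v, hv⟩ := exists_inner_eq_of_momentMatrix_posSemidef hM
  obtain ⟨W, A, w, hA, hnorm, hmoment⟩ :=
    exists_symmetric_contraction hd hv (norm_sum_smul_succ_le hv hM')
  have hw : ‖w‖ = 1 := by
    have h := hmoment 0 (Nat.zero_le d)
    rw [pow_zero, Module.End.one_apply, real_inner_self_eq_norm_sq, h0] at h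
    exact (pow_eq_one_iff_of_nonneg (norm_nonneg w) two_ne_zero).mp h
  obtain ⟨ν, hν, hsupp, hint⟩ := exists_measure_integral_pow_eq_inner A hA hnorm w hw
  exact ⟨ν, hν, hsupp, fun k hk => (hint k).trans (hmoment k hk)⟩
end

section
/- (Proposition 2.1, moment extension to product measures.) Let D ≥ 1, d ≥ 1, and for each i = 1, …, D let μ_i = (μ_{i,0}, …, μ_{i,2d}) ∈ ℝ^{2d+1} satisfy μ_{i,0} = 1, 𝓜_d(μ_i) is PSD, and 𝓜_{d−1}(μ_i; 1−x²) is PSD. Then there exist Borel probability measures ν_1, …, ν_D on ℝ, each with ν_i([-1,1]) = 1, such that the product measure ν = ν_1 ⊗ ⋯ ⊗ ν_D on ℝ^D satisfies ν([-1,1]^D) = 1 and ∫_{[-1,1]^D} x_1^{n_1} ⋯ x_D^{n_D} dν(x) = ∏_{i=1}^D μ_{i,n_i} for every multi-index n ∈ ℕ^D with 0 ≤ n_i ≤ d for all i. -/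
open MeasureTheory

/-- The hypercube `[-1,1]^D` in `ℝ^D`. -/
def cube (D : ℕ) : Set (Fin D → ℝ) := Set.univ.pi fun _ => Set.Icc (-1) 1

open scoped InnerProductSpace

/-- Every real positive semidefinite matrix is a Gram matrix. -/
theorem Matrix.PosSemidef.exists_gram {ι : Type*} [Fintype ι] {M : Matrix ι ι ℝ}
    (hM : M.PosSemidef) :
    ∃ v : ι → EuclideanSpace ℝ ι, ∀ i j, ⟪v i, v j⟫_ℝ = M i j := by
  classical
  obtain ⟨X, hX, -, rfl⟩ := open scoped MatrixOrder in
    CFC.exists_sqrt_of_isSelfAdjoint_of_quasispectrumRestricts hM.isHermitian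
      (QuasispectrumRestricts.nnreal_of_nonneg hM.nonneg)
  refine ⟨fun i => WithLp.toLp 2 (X i), fun i j => ?_⟩
  have hsymm : ∀ a b, X a b = X b a := fun a b => by
    simpa using congrFun (congrFun hX.star_eq b) a
  simp only [PiLp.inner_apply, RCLike.inner_apply, conj_trivial, Matrix.mul_apply]
  exact Finset.sum_congr rfl fun k _ => by rw [hsymm j k, mul_comm]

/-- The spectral measure of a symmetric contraction at a unit vector: a probability measure on
`[-1,1]` whose moments are `⟪A ^ k w, w⟫`. -/
theorem LinearMap.IsSymmetric.exists_spectralMeasure {E : Type*} [NormedAddCommGroup E]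
    [InnerProductSpace ℝ E] [FiniteDimensional ℝ E] {A : E →ₗ[ℝ] E} (hA : A.IsSymmetric)
    (hA1 : ∀ x, ‖A x‖ ≤ ‖x‖) {w : E} (hw : ‖w‖ = 1) :
    ∃ ν : ProbabilityMeasure ℝ, (ν : Measure ℝ) (Set.Icc (-1 : ℝ) 1) = 1 ∧
      ∀ k : ℕ, ∫ x, x ^ k ∂(ν : Measure ℝ) = ⟪(A ^ k) w, w⟫_ℝ := by
  let b := hA.eigenvectorBasis rfl
  let l := hA.eigenvalues rfl
  have hb : ∀ j, A (b j) = l j • b j := hA.apply_eigenvectorBasis rfl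
  have hl : ∀ j, l j ∈ Set.Icc (-1 : ℝ) 1 := fun j => by
    have h := hA1 (b j)
    rw [hb, norm_smul, b.norm_eq_one, mul_one, Real.norm_eq_abs] at h
    exact abs_le.mp h
  have hpow : ∀ k j, (A ^ k) (b j) = l j ^ k • b j := fun k j => by
    induction k with
    | zero => simp
    | succ k ih => rw [pow_succ', Module.End.mul_apply, ih, map_smul, hb, smul_smul, pow_succ]
  have hsum : ∑ j, ENNReal.ofReal (⟪b j, w⟫_ℝ ^ 2) = 1 := by
    rw [← ENNReal.ofReal_sum_of_nonneg fun _ _ => sq_nonneg _]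
    have h := b.sum_sq_norm_inner_right w
    simp only [Real.norm_eq_abs, sq_abs, hw, one_pow] at h
    rw [h, ENNReal.ofReal_one]
  let m : Measure ℝ := ∑ j, ENNReal.ofReal (⟪b j, w⟫_ℝ ^ 2) • Measure.dirac (l j)
  have hm : IsProbabilityMeasure m := ⟨by simpa [m, Measure.finsetSum_apply] using hsum⟩
  refine ⟨⟨m, hm⟩, ?_, fun k => ?_⟩
  · simpa [m, Measure.finsetSum_apply, hl] using hsum
  · change ∫ x, x ^ k ∂m = _
    rw [integral_finsetSum_measure fun j _ =>
      (integrable_dirac (by simp [enorm_lt_top])).smul_measure ENNReal.ofReal_ne_top,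
      ← b.sum_inner_mul_inner ((A ^ k) w) w]
    refine Finset.sum_congr rfl fun j _ => ?_
    rw [integral_smul_measure, integral_dirac, ENNReal.toReal_ofReal (sq_nonneg _),
      hA.pow k w (b j), hpow, inner_smul_right, real_inner_comm, smul_eq_mul]
    ring

/-- If the shift `v m ↦ v (m + 1)` is symmetric and contractive on the span of `v 0, …, v (d - 1)`,
then the numbers `⟪v k, v 0⟫` for `k ≤ d` are moments of a probability measure on `[-1,1]`. -/
theorem exists_probabilityMeasure_of_shift {E : Type*} [NormedAddCommGroup E]
    [InnerProductSpace ℝ E] [FiniteDimensional ℝ E] {d : ℕ} (hd : 1 ≤ d) (v : ℕ → E)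
    (hv0 : ‖v 0‖ = 1)
    (hsymm : ∀ m n : Fin d, ⟪v (m + 1), v n⟫_ℝ = ⟪v m, v (n + 1)⟫_ℝ)
    (hcontr : ∀ c : Fin d → ℝ, ‖∑ m, c m • v (m + 1)‖ ≤ ‖∑ m, c m • v m‖) :
    ∃ ν : ProbabilityMeasure ℝ, (ν : Measure ℝ) (Set.Icc (-1 : ℝ) 1) = 1 ∧
      ∀ k ≤ d, ∫ x, x ^ k ∂(ν : Measure ℝ) = ⟪v k, v 0⟫_ℝ := by
  let S : (Fin d → ℝ) →ₗ[ℝ] E := Fintype.linearCombination ℝ fun m : Fin d => v m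
  let T : (Fin d → ℝ) →ₗ[ℝ] E := Fintype.linearCombination ℝ fun m : Fin d => v (m + 1)
  have hTS : ∀ c, ‖T c‖ ≤ ‖S c‖ := hcontr
  let W := LinearMap.range S
  obtain ⟨g, hg⟩ := S.rangeRestrict.exists_rightInverse_of_surjective S.range_rangeRestrict
  have hSg : ∀ x : W, S (g x) = x := fun x => congrArg Subtype.val (LinearMap.congr_fun hg x)
  have hTg : ∀ c (x : W), S c = x → T (g x) = T c := fun c x h => by
    rw [← sub_eq_zero, ← map_sub, ← norm_le_zero_iff]
    exact (hTS _).trans (by rw [map_sub, hSg, h, sub_self, norm_zero])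
  let A : W →ₗ[ℝ] W := W.orthogonalProjectionOnto.toLinearMap ∘ₗ T ∘ₗ g
  have hAapp : ∀ x, A x = W.orthogonalProjectionOnto (T (g x)) := fun _ => rfl
  have hTSsymm : ∀ c c', ⟪T c, S c'⟫_ℝ = ⟪S c, T c'⟫_ℝ := fun c c' => by
    simp only [S, T, Fintype.linearCombination_apply, sum_inner, inner_sum, inner_smul_left,
      inner_smul_right, hsymm]
  have hA : A.IsSymmetric := fun x y => by
    rw [hAapp, hAapp, Submodule.inner_orthogonalProjectionOnto_eq_of_mem_right,
      Submodule.inner_orthogonalProjectionOnto_eq_of_mem_left, ← hSg x, ← hSg y, hTSsymm]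
  have hA1 : ∀ x, ‖A x‖ ≤ ‖x‖ := fun x => by
    rw [hAapp]
    refine (W.norm_orthogonalProjectionOnto_apply_le _).trans ((hTS _).trans ?_)
    rw [hSg, Submodule.coe_norm]
  have hSe : ∀ m : Fin d, S (Pi.single m 1) = v m := fun m => by
    simp [S, Fintype.linearCombination_apply_single]
  have hTe : ∀ m : Fin d, T (Pi.single m 1) = v (m + 1) := fun m => by
    simp [T, Fintype.linearCombination_apply_single]
  have hvW : ∀ k < d, v k ∈ W := fun k hk => ⟨_, hSe ⟨k, hk⟩⟩
  have hproj : ∀ k (hk : k < d), W.orthogonalProjectionOnto (v k) = ⟨v k, hvW k hk⟩ :=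
    fun k hk => W.orthogonalProjectionOnto_mem_subspace_eq_self ⟨v k, hvW k hk⟩
  let w : W := ⟨v 0, hvW 0 hd⟩
  have hAv : ∀ k ≤ d, (A ^ k) w = W.orthogonalProjectionOnto (v k) := fun k => by
    induction k with
    | zero => intro _; rw [hproj 0 hd]; rfl
    | succ k ih =>
      intro hk
      have hkd : k < d := hk
      rw [pow_succ', Module.End.mul_apply, ih hkd.le, hproj k hkd, hAapp,
        hTg _ _ (hSe ⟨k, hkd⟩), hTe]
  obtain ⟨ν, hν, hmom⟩ := hA.exists_spectralMeasure hA1 (w := w) hv0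
  refine ⟨ν, hν, fun k hk => ?_⟩
  rw [hmom, hAv k hk, Submodule.inner_orthogonalProjectionOnto_eq_of_mem_right]

/-- A truncated moment sequence with positive semidefinite moment and localized moment matrices
agrees up to degree `d` with the moments of a probability measure on `[-1,1]`. -/
theorem exists_probabilityMeasure_of_posSemidef {d : ℕ} (hd : 1 ≤ d) {μ : ℕ → ℝ} (h0 : μ 0 = 1)
    (hM : (momentMatrix d μ).PosSemidef) (hM' : (locMomentMatrix d μ).PosSemidef) :
    ∃ ν : ProbabilityMeasure ℝ, (ν : Measure ℝ) (Set.Icc (-1 : ℝ) 1) = 1 ∧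
      ∀ k ≤ d, ∫ x, x ^ k ∂(ν : Measure ℝ) = μ k := by
  obtain ⟨u, hu⟩ := hM.exists_gram
  let v : ℕ → EuclideanSpace ℝ (Fin (d + 1)) := fun k => u (Fin.ofNat (d + 1) k)
  have hv : ∀ m n, m ≤ d → n ≤ d → ⟪v m, v n⟫_ℝ = μ (m + n) := fun m n hm hn => by
    simp only [v, hu, momentMatrix, Fin.val_ofNat, Nat.mod_eq_of_lt (Nat.lt_succ_of_le hm),
      Nat.mod_eq_of_lt (Nat.lt_succ_of_le hn)]
  have hv0 : ‖v 0‖ = 1 := by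
    rw [← sq_eq_sq₀ (norm_nonneg _) zero_le_one, ← real_inner_self_eq_norm_sq,
      hv 0 0 d.zero_le d.zero_le, h0, one_pow]
  obtain ⟨ν, hν, hmom⟩ := exists_probabilityMeasure_of_shift hd v hv0
    (fun m n => by
      rw [hv _ _ m.2 n.2.le, hv _ _ m.2.le n.2, Nat.succ_add_eq_add_succ])
    (fun c => by
      rw [← sq_le_sq₀ (norm_nonneg _) (norm_nonneg _), ← real_inner_self_eq_norm_sq,
        ← real_inner_self_eq_norm_sq, ← sub_nonneg]
      refine (hM'.dotProduct_mulVec_nonneg c).trans_eq ?_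
      simp only [dotProduct, Matrix.mulVec, Finset.mul_sum, sum_inner, inner_sum, inner_smul_left,
        inner_smul_right, star_trivial, conj_trivial, ← Finset.sum_sub_distrib, locMomentMatrix]
      refine Finset.sum_congr rfl fun m _ => Finset.sum_congr rfl fun n _ => ?_
      rw [hv _ _ n.2.le m.2.le, hv _ _ n.2 m.2, show (n + 1 + (m + 1) : ℕ) = m + n + 2 by ring,
        add_comm (n : ℕ)]
      ring)
  exact ⟨ν, hν, fun k hk => by rw [hmom k hk, hv k 0 hk d.zero_le, add_zero]⟩

/-- Proposition 2.1 (moment extension to product measures): if for each `i` the vector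
`μ_i` satisfies `μ_{i,0} = 1` and has PSD moment matrices `𝓜_d(μ_i)` and
`𝓜_{d-1}(μ_i; 1-x²)`, then there are Borel probability measures `ν_i` on `ℝ`, each
with `ν_i [-1,1] = 1`, whose product `ν = ν_1 ⊗ ⋯ ⊗ ν_D` satisfies `ν([-1,1]^D) = 1`
and `∫_{[-1,1]^D} x^n dν = ∏ᵢ μ_{i,nᵢ}` for all multi-indices `n` with `nᵢ ≤ d`. -/
theorem statement1 (D d : ℕ) (hD : 1 ≤ D) (hd : 1 ≤ d)
    (μ : Fin D → ℕ → ℝ) (h0 : ∀ i, μ i 0 = 1)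
    (hM : ∀ i, (momentMatrix d (μ i)).PosSemidef)
    (hM' : ∀ i, (locMomentMatrix d (μ i)).PosSemidef) :
    ∃ ν : Fin D → ProbabilityMeasure ℝ,
      (∀ i, (ν i : Measure ℝ) (Set.Icc (-1 : ℝ) 1) = 1) ∧
      (Measure.pi fun i => (ν i : Measure ℝ)) (cube D) = 1 ∧
      ∀ n : Fin D → ℕ, (∀ i, n i ≤ d) →
        ∫ x in cube D, (∏ i, x i ^ n i) ∂(Measure.pi fun i => (ν i : Measure ℝ)) =
          ∏ i, μ i (n i) := by
  choose ν hν hmom using fun i =>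
    exists_probabilityMeasure_of_posSemidef hd (h0 i) (hM i) (hM' i)
  have hcube : (Measure.pi fun i => (ν i : Measure ℝ)) (cube D) = 1 := by
    rw [cube, Measure.pi_pi]
    exact Finset.prod_eq_one fun i _ => hν i
  refine ⟨ν, hν, hcube, fun n hn => ?_⟩
  have hmeas : MeasurableSet (cube D) := MeasurableSet.univ_pi fun _ => measurableSet_Icc
  have hae : ∀ᵐ x ∂(Measure.pi fun i => (ν i : Measure ℝ)), x ∈ cube D :=
    (prob_compl_eq_zero_iff hmeas).mpr hcube
  rw [Measure.restrict_eq_self_of_ae_mem hae,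
    integral_fintype_prod_eq_prod fun i (x : ℝ) => x ^ n i]
  exact Finset.prod_congr rfl fun i _ => hmom i (n i) (hn i)
end

section
/- (Nonnegativity of the truncated Riesz functional; intermediate claim in the proof of Proposition 2.1.) Let d ≥ 1 and let μ = (μ_0, …, μ_{2d}) ∈ ℝ^{2d+1} be such that 𝓜_d(μ) is PSD and 𝓜_{d−1}(μ; 1−x²) is PSD. Then for every real polynomial q(x) = Σ_{k=0}^{d} q_k x^k of degree at most d satisfying q(x) ≥ 0 for all x ∈ [-1,1], one has Σ_{k=0}^{d} q_k μ_k ≥ 0. -/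
open MeasureTheory

open Polynomial

/-- The cone of polynomials `∑ pᵢ² + (1 - x²) ∑ rⱼ²` with `deg pᵢ ≤ n` and `deg rⱼ ≤ n - 1`. -/
inductive IsTruncatedModule : ℕ → ℝ[X] → Prop
  | sq {n : ℕ} (p : ℝ[X]) (hp : p.natDegree ≤ n) : IsTruncatedModule n (p * p)
  | loc {n : ℕ} (p : ℝ[X]) (hp : p.natDegree + 1 ≤ n) :
      IsTruncatedModule n ((1 - X ^ 2) * (p * p))
  | add {n : ℕ} {p r : ℝ[X]} : IsTruncatedModule n p → IsTruncatedModule n r →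
      IsTruncatedModule n (p + r)

namespace IsTruncatedModule

lemma mono {m n : ℕ} {p : ℝ[X]} (hp : IsTruncatedModule m p) (hmn : m ≤ n) :
    IsTruncatedModule n p := by
  induction hp with
  | sq p hp => exact sq p (hp.trans hmn)
  | loc p hp => exact loc p (hp.trans hmn)
  | add _ _ h₁ h₂ => exact h₁.add h₂

lemma mul {m n : ℕ} {p r : ℝ[X]} (hp : IsTruncatedModule m p) (hr : IsTruncatedModule n r) :
    IsTruncatedModule (m + n) (p * r) := by
  induction hp with
  | add _ _ h₁ h₂ => rw [add_mul]; exact h₁.add h₂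
  | sq p hp =>
    induction hr with
    | add _ _ h₁ h₂ => rw [mul_add]; exact h₁.add h₂
    | sq r hr =>
      rw [mul_mul_mul_comm]
      exact sq _ (natDegree_mul_le.trans (by lia))
    | loc r hr =>
      rw [mul_left_comm, mul_mul_mul_comm]
      exact loc _ (by have := natDegree_mul_le (p := p) (q := r); lia)
  | loc p hp =>
    induction hr with
    | add _ _ h₁ h₂ => rw [mul_add]; exact h₁.add h₂
    | sq r hr =>
      rw [mul_assoc, mul_mul_mul_comm]
      exact loc _ (by have := natDegree_mul_le (p := p) (q := r); lia)
    | loc r hr =>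
      have hdeg : (1 - X ^ 2 : ℝ[X]).natDegree ≤ 2 := by compute_degree
      have h := sq (n := m + n) ((1 - X ^ 2) * (p * r)) (natDegree_mul_le.trans
        (by have := natDegree_mul_le (p := p) (q := r); lia))
      convert h using 1
      ring

lemma const {c : ℝ} (hc : 0 ≤ c) (n : ℕ) : IsTruncatedModule n (C c) := by
  rw [← Real.mul_self_sqrt hc, C_mul]
  exact sq _ (by simp)

lemma X_sub_C {a : ℝ} (ha : a ≤ -1) : IsTruncatedModule 1 (X - C a) := by
  have h := ((const (c := 1 / 2) (by norm_num) 0).mul ((sq (n := 1) (1 + X) (by compute_degree)).add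
    (loc 1 (by simp)))).add (const (c := -1 - a) (by linarith) 1)
  convert h using 1
  have h2 : (C (1 / 2) : ℝ[X]) * 2 = 1 := by
    rw [← C_ofNat, ← C_mul]; norm_num
  simp only [C_sub, C_neg, C_1]
  linear_combination (-1 - X) * h2

lemma C_sub_X {a : ℝ} (ha : 1 ≤ a) : IsTruncatedModule 1 (C a - X) := by
  have h := ((const (c := 1 / 2) (by norm_num) 0).mul ((sq (n := 1) (1 - X) (by compute_degree)).add
    (loc 1 (by simp)))).add (const (c := a - 1) (by linarith) 1)
  convert h using 1
  have h2 : (C (1 / 2) : ℝ[X]) * 2 = 1 := by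
    rw [← C_ofNat, ← C_mul]; norm_num
  simp only [C_sub, C_1]
  linear_combination (X - 1) * h2

end IsTruncatedModule

/-- Nonnegativity of a polynomial on `[-1, 1]` may be tested off a single interior point. -/
lemma eval_nonneg_of_forall_ne {p : ℝ[X]} (a : ℝ)
    (h : ∀ x ∈ Set.Ioo (-1 : ℝ) 1, x ≠ a → 0 ≤ p.eval x) :
    ∀ x ∈ Set.Icc (-1 : ℝ) 1, 0 ≤ p.eval x := by
  have hclosed : IsClosed {x | 0 ≤ p.eval x} := isClosed_le continuous_const p.continuous
  have hIoo : Set.Ioo (-1 : ℝ) 1 ⊆ {x | 0 ≤ p.eval x} :=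
    ((dense_compl_singleton a).open_subset_closure_inter isOpen_Ioo).trans
      (closure_minimal (fun x hx => h x hx.1 hx.2) hclosed)
  have hcl := closure_minimal hIoo hclosed
  rwa [closure_Ioo (by norm_num)] at hcl

theorem isTruncatedModule_of_nonneg (n : ℕ) (p : ℝ[X]) (hn : p.natDegree ≤ n)
    (hp : ∀ x ∈ Set.Icc (-1 : ℝ) 1, 0 ≤ p.eval x) : IsTruncatedModule n p := by
  induction n using Nat.strong_induction_on generalizing p with
  | _ n ih =>
  by_cases hdeg : p.natDegree = 0
  · obtain ⟨c, rfl⟩ := natDegree_eq_zero.1 hdeg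
    exact .const (by simpa using hp 0 (by norm_num)) n
  have hp0 : p ≠ 0 := by rintro rfl; simp at hdeg
  have split {k : ℕ} {s r : ℝ[X]} (hs : IsTruncatedModule k s) (hk : 0 < k)
      (hsk : k ≤ s.natDegree) (hpsr : p = s * r)
      (hr : ∀ x ∈ Set.Icc (-1 : ℝ) 1, 0 ≤ r.eval x) : IsTruncatedModule n p := by
    have hne := mul_ne_zero_iff.1 (hpsr ▸ hp0)
    have hd : p.natDegree = s.natDegree + r.natDegree := hpsr ▸ natDegree_mul hne.1 hne.2
    rw [hpsr]
    exact (hs.mul (ih (n - k) (by lia) r (by lia) hr)).mono (by lia)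
  obtain ⟨z, hz⟩ := IsAlgClosed.exists_aeval_eq_zero ℂ p
    (fun h => hdeg (natDegree_eq_zero_iff_degree_le_zero.2 h.le))
  by_cases him : z.im = 0
  · obtain ⟨a, rfl⟩ : ∃ a : ℝ, z = a := ⟨z.re, Complex.ext rfl (by simpa using him)⟩
    have hroot : p.IsRoot a := by
      have := hz
      rw [← Complex.coe_algebraMap, aeval_algebraMap_apply] at this
      simpa using this
    obtain ⟨r, hr⟩ := dvd_iff_isRoot.2 hroot
    have heval (x : ℝ) : p.eval x = (x - a) * r.eval x := by rw [hr]; simp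
    rcases le_or_gt a (-1) with ha | ha
    · refine split (.X_sub_C ha) one_pos (by simp) hr (eval_nonneg_of_forall_ne a ?_)
      intro x hx _
      have := hp x ⟨hx.1.le, hx.2.le⟩
      rw [heval] at this
      exact nonneg_of_mul_nonneg_right this (by linarith [hx.1])
    rcases le_or_gt 1 a with ha' | ha'
    · refine split (r := -r) (.C_sub_X ha') one_pos ?_ (by rw [hr]; ring)
        (eval_nonneg_of_forall_ne a ?_)
      · rw [← neg_sub, natDegree_neg]; simp
      intro x hx _
      have := hp x ⟨hx.1.le, hx.2.le⟩
      rw [heval, ← neg_mul_neg] at this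
      rw [eval_neg]
      exact nonneg_of_mul_nonneg_right this (by linarith [hx.2])
    have hra : r.IsRoot a := by
      have hmin : IsLocalMin (fun x => p.eval x) a := by
        filter_upwards [Ioo_mem_nhds ha ha'] with x hx
        rw [hroot.eq_zero]
        exact hp x ⟨hx.1.le, hx.2.le⟩
      have hder := hmin.deriv_eq_zero
      rw [Polynomial.deriv, hr] at hder
      simpa using hder
    obtain ⟨s, hs⟩ := dvd_iff_isRoot.2 hra
    have hps : p = (X - C a) * (X - C a) * s := by rw [hr, hs]; ring
    refine split (.sq (n := 1) (X - C a) (by simp)) one_pos ?_ hps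
      (eval_nonneg_of_forall_ne a ?_)
    · rw [natDegree_mul (X_sub_C_ne_zero a) (X_sub_C_ne_zero a)]; simp
    intro x hx hxa
    have := hp x ⟨hx.1.le, hx.2.le⟩
    rw [hps] at this
    simp only [eval_mul, eval_sub, eval_X, eval_C] at this
    exact nonneg_of_mul_nonneg_right this (mul_self_pos.2 (sub_ne_zero.2 hxa))
  · obtain ⟨r, hr⟩ := quadratic_dvd_of_aeval_eq_zero_im_ne_zero p hz him
    have hquad : X ^ 2 - C (2 * z.re) * X + C (‖z‖ ^ 2) =
        (X - C z.re) * (X - C z.re) + C (z.im ^ 2) := by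
      rw [Complex.sq_norm, Complex.normSq_apply]
      simp only [C_mul, C_add, C_pow, C_ofNat]
      ring
    refine split (k := 2) (hquad ▸ .add (.sq _ (by simp)) (.const (sq_nonneg _) 2)) two_pos ?_ hr ?_
    · apply ge_of_eq; compute_degree!
    intro x hx
    have := hp x hx
    rw [hr, hquad, eval_mul] at this
    refine nonneg_of_mul_nonneg_right this ?_
    simp only [eval_mul, eval_sub, eval_X, eval_C, eval_add]
    exact add_pos_of_nonneg_of_pos (mul_self_nonneg _) (sq_pos_of_ne_zero him)

/-- The Riesz functional `∑ pₖ xᵏ ↦ ∑ pₖ μₖ`. -/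
noncomputable def rieszFunctional (μ : ℕ → ℝ) : ℝ[X] →ₗ[ℝ] ℝ :=
  lsum fun k => μ k • LinearMap.id

lemma rieszFunctional_X_pow (μ : ℕ → ℝ) (k : ℕ) : rieszFunctional μ (X ^ k) = μ k := by
  simp [rieszFunctional, ← monomial_one_right_eq_X_pow, sum_monomial_index]

lemma map_mul_sq_nonneg (L : ℝ[X] →ₗ[ℝ] ℝ) (w : ℝ[X]) {n : ℕ}
    (hL : (Matrix.of fun i j : Fin n => L (w * X ^ (i.1 + j.1))).PosSemidef)
    (p : ℝ[X]) (hp : p.natDegree < n) : 0 ≤ L (w * (p * p)) := by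
  have hsum : p = ∑ i : Fin n, p.coeff i • X ^ i.1 := by
    rw [Fin.sum_univ_eq_sum_range (fun i => p.coeff i • (X : ℝ[X]) ^ i)]
    simpa only [smul_eq_C_mul] using p.as_sum_range_C_mul_X_pow' hp
  have h := hL.dotProduct_mulVec_nonneg (fun i => p.coeff i)
  refine h.trans_eq (Eq.symm ?_)
  conv_lhs => rw [hsum, Finset.sum_mul_sum]
  simp only [Finset.mul_sum, map_sum, dotProduct, Matrix.mulVec,
    Matrix.of_apply, Pi.star_apply, star_trivial]
  refine Finset.sum_congr rfl fun i _ => Finset.sum_congr rfl fun j _ => ?_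
  rw [smul_mul_smul_comm, mul_smul_comm, map_smul, ← pow_add, smul_eq_mul]
  ring

lemma IsTruncatedModule.rieszFunctional_nonneg {d : ℕ} {μ : ℕ → ℝ}
    (hM : (momentMatrix d μ).PosSemidef) (hM' : (locMomentMatrix d μ).PosSemidef)
    {p : ℝ[X]} (hp : IsTruncatedModule d p) : 0 ≤ rieszFunctional μ p := by
  induction hp with
  | add _ _ h₁ h₂ => rw [map_add]; exact add_nonneg h₁ h₂
  | sq p hp =>
    rw [← one_mul (p * p)]
    refine map_mul_sq_nonneg _ 1 ?_ p (Nat.lt_succ_of_le hp)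
    convert hM using 1
    ext i j
    simp [rieszFunctional_X_pow, momentMatrix]
  | loc p hp =>
    refine map_mul_sq_nonneg _ _ ?_ p hp
    convert hM' using 1
    ext i j
    simp [rieszFunctional_X_pow, locMomentMatrix, sub_mul, ← pow_add, add_comm 2]

/-- Nonnegativity of the truncated Riesz functional: if `𝓜_d(μ)` and
`𝓜_{d-1}(μ; 1-x²)` are PSD, then for every polynomial `q` of degree at most `d`
that is nonnegative on `[-1,1]`, we have `Σ_k q_k μ_k ≥ 0`. -/
theorem statement2 (d : ℕ) (hd : 1 ≤ d) (μ : ℕ → ℝ)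
    (hM : (momentMatrix d μ).PosSemidef) (hM' : (locMomentMatrix d μ).PosSemidef)
    (q : ℕ → ℝ)
    (hq : ∀ x ∈ Set.Icc (-1 : ℝ) 1, 0 ≤ ∑ k ∈ Finset.range (d+1), q k * x ^ k) :
    0 ≤ ∑ k ∈ Finset.range (d+1), q k * μ k := by
  have hp := isTruncatedModule_of_nonneg d (∑ k ∈ Finset.range (d + 1), q k • X ^ k)
    (natDegree_sum_le_of_forall_le _ _ fun k hk => (natDegree_smul_le _ _).trans
      ((natDegree_X_pow_le k).trans (Nat.lt_succ_iff.1 (Finset.mem_range.1 hk))))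
    (by simpa [eval_finsetSum] using hq)
  simpa [rieszFunctional_X_pow] using hp.rieszFunctional_nonneg hM hM'
end

section
/- (Surjectivity of the moment map; Proposition A.7.) Let D ≥ 1, d ≥ 1, L ≥ 1, and let (μ_i^{(l)})_{1≤i≤D, 1≤l≤L} be a tuple in the feasible set F_L. Then there exist finite positive Borel measures ν_i^{(l)} on ℝ, each with ν_i^{(l)}(ℝ ∖ [-1,1]) = 0, such that the measure ν = Σ_{l=1}^L ν_1^{(l)} ⊗ ⋯ ⊗ ν_D^{(l)} on ℝ^D has total mass ν([-1,1]^D) = 1 and satisfies ∫ x_1^{n_1} ⋯ x_D^{n_D} dν(x) = Σ_{l=1}^L ∏_{i=1}^D μ_{i,n_i}^{(l)} for every multi-index n ∈ ℕ^D with 0 ≤ n_i ≤ d for all i. -/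
open MeasureTheory

/-- The feasible set `F_L`: all the moment matrices `𝓜_d(μ_i^{(l)})` and
`𝓜_{d-1}(μ_i^{(l)}; 1-x²)` are PSD and `Σ_l ∏_i μ_{i,0}^{(l)} = 1`. -/
def Feasible (D d L : ℕ) (μ : Fin L → Fin D → ℕ → ℝ) : Prop :=
  (∀ l i, (momentMatrix d (μ l i)).PosSemidef) ∧
  (∀ l i, (locMomentMatrix d (μ l i)).PosSemidef) ∧
  (∑ l, ∏ i, μ l i 0) = 1

open scoped InnerProductSpace

/-- A symmetric contraction `A` of a finite-dimensional real inner product space and a vector `w`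
define a spectral measure on `[-1, 1]` with moments `⟪A ^ k w, w⟫`. -/
theorem LinearMap.IsSymmetric.exists_spectral_measure {W : Type*} [NormedAddCommGroup W]
    [InnerProductSpace ℝ W] [FiniteDimensional ℝ W] {A : W →ₗ[ℝ] W} (hA : A.IsSymmetric)
    (hA1 : ∀ w, ‖A w‖ ≤ ‖w‖) (w : W) :
    ∃ ν : FiniteMeasure ℝ, (ν : Measure ℝ) (Set.Icc (-1 : ℝ) 1)ᶜ = 0 ∧
      ∀ k : ℕ, ∫ x, x ^ k ∂(ν : Measure ℝ) = ⟪(A ^ k) w, w⟫_ℝ := by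
  let e := hA.eigenvectorBasis rfl
  let ev := hA.eigenvalues rfl
  have he : ∀ j, A (e j) = ev j • e j := fun j => hA.apply_eigenvectorBasis rfl j
  have hev : ∀ j, ev j ∈ Set.Icc (-1 : ℝ) 1 := by
    intro j
    have h := hA1 (e j)
    rw [he, norm_smul, e.orthonormal.1 j, mul_one, Real.norm_eq_abs] at h
    exact abs_le.mp h
  have hpow : ∀ (k : ℕ) j, ⟪(A ^ k) w, e j⟫_ℝ = ev j ^ k * ⟪w, e j⟫_ℝ := by
    intro k j
    induction k with
    | zero => simp
    | succ k ih =>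
      rw [pow_succ', Module.End.mul_apply, hA, he, inner_smul_right, ih]
      ring
  let m : Measure ℝ := ∑ j, ENNReal.ofReal (⟪w, e j⟫_ℝ ^ 2) • Measure.dirac (ev j)
  have hfin : ∀ j, IsFiniteMeasure
      (ENNReal.ofReal (⟪w, e j⟫_ℝ ^ 2) • Measure.dirac (ev j) : Measure ℝ) :=
    fun j => Measure.smul_finite _ ENNReal.ofReal_ne_top
  have hm : IsFiniteMeasure m := inferInstance
  refine ⟨⟨m, hm⟩, ?_, fun k => ?_⟩
  · simp [m, hev, -Set.mem_Icc]
  · change ∫ x, x ^ k ∂m = _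
    rw [integral_finsetSum_measure]
    · rw [← e.sum_inner_mul_inner]
      refine Finset.sum_congr rfl fun j _ => ?_
      rw [integral_smul_measure, integral_dirac, ENNReal.toReal_ofReal (sq_nonneg _), hpow,
        real_inner_comm w (e j), smul_eq_mul]
      ring
    · intro j _
      exact (integrable_dirac (by simp)).smul_measure ENNReal.ofReal_ne_top

/-- Two linear maps `F`, `S` with `S` dominated by `F` and `⟪S c, F c'⟫ = ⟪F c, S c'⟫` come from
a symmetric contraction of the range of `F`, the compression of `F c ↦ S c`. -/
theorem LinearMap.exists_isSymmetric_compression {V E : Type*} [AddCommGroup V] [Module ℝ V]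
    [NormedAddCommGroup E] [InnerProductSpace ℝ E] [FiniteDimensional ℝ E] (F S : V →ₗ[ℝ] E)
    (hle : ∀ c, ‖S c‖ ≤ ‖F c‖) (hsymm : ∀ c c', ⟪S c, F c'⟫_ℝ = ⟪F c, S c'⟫_ℝ) :
    ∃ A : LinearMap.range F →ₗ[ℝ] LinearMap.range F, A.IsSymmetric ∧ (∀ w, ‖A w‖ ≤ ‖w‖) ∧
      ∀ c, A (F.rangeRestrict c) = (LinearMap.range F).orthogonalProjectionOnto (S c) := by
  obtain ⟨g, hg⟩ := F.rangeRestrict.exists_rightInverse_of_surjective F.range_rangeRestrict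
  have hFg : ∀ w, F (g w) = w := fun w => congrArg Subtype.val (LinearMap.congr_fun hg w)
  have hSg : ∀ c, S (g (F.rangeRestrict c)) = S c := by
    intro c
    have h := hle (g (F.rangeRestrict c) - c)
    rw [map_sub F, hFg, LinearMap.codRestrict_apply, sub_self, norm_zero, norm_le_zero_iff, map_sub] at h
    exact sub_eq_zero.mp h
  refine ⟨(LinearMap.range F).orthogonalProjectionOnto.toLinearMap ∘ₗ S ∘ₗ g, ?_, ?_, ?_⟩
  · intro x y
    simp only [LinearMap.comp_apply, ContinuousLinearMap.coe_coe]
    rw [Submodule.inner_orthogonalProjectionOnto_eq_of_mem_right,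
      Submodule.inner_orthogonalProjectionOnto_eq_of_mem_left, ← hFg y, hsymm, hFg]
  · intro w
    have h := hle (g w)
    rw [hFg] at h
    exact (Submodule.norm_orthogonalProjectionOnto_apply_le _ (S (g w))).trans h
  · intro c
    simp [hSg]

open scoped MatrixOrder Matrix.Norms.L2Operator in
/-- If the moment matrix of degree `d` and the one localized at `1 - x²` are positive semidefinite,
then the moments up to order `d` are those of a finite measure on `[-1, 1]`. -/
theorem exists_finiteMeasure_moments {d : ℕ} (hd : 1 ≤ d) {μ : ℕ → ℝ}
    (hM : (momentMatrix d μ).PosSemidef) (hL : (locMomentMatrix d μ).PosSemidef) :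
    ∃ ν : FiniteMeasure ℝ, (ν : Measure ℝ) (Set.Icc (-1 : ℝ) 1)ᶜ = 0 ∧
      ∀ k ≤ d, ∫ x, x ^ k ∂(ν : Measure ℝ) = μ k := by
  obtain ⟨B, hB⟩ := CStarAlgebra.nonneg_iff_eq_star_mul_self.mp hM.nonneg
  let v : Fin (d + 1) → EuclideanSpace ℝ (Fin (d + 1)) := fun m => WithLp.toLp 2 fun k => B k m
  have hv : ∀ m n, ⟪v m, v n⟫_ℝ = μ (m + n) := by
    intro m n
    have h := congrFun (congrFun hB m) n
    rw [Matrix.mul_apply] at h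
    simpa [momentMatrix, v, PiLp.inner_apply, mul_comm] using h.symm
  let F := Fintype.linearCombination ℝ fun m : Fin d => v m.castSucc
  let S := Fintype.linearCombination ℝ fun m : Fin d => v m.succ
  have hle : ∀ c, ‖S c‖ ≤ ‖F c‖ := by
    intro c
    have h := hL.dotProduct_mulVec_nonneg c
    refine (sq_le_sq₀ (norm_nonneg _) (norm_nonneg _)).mp (sub_nonneg.mp (h.trans_eq ?_))
    rw [← real_inner_self_eq_norm_sq, ← real_inner_self_eq_norm_sq]
    simp only [F, S, Fintype.linearCombination_apply, sum_inner, inner_sum, inner_smul_left,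
      inner_smul_right, hv, dotProduct, Matrix.mulVec, locMomentMatrix, Finset.mul_sum,
      ← Finset.sum_sub_distrib]
    refine Finset.sum_congr rfl fun i _ => Finset.sum_congr rfl fun j _ => ?_
    simp only [Pi.star_apply, star_trivial, Fin.val_succ, Fin.val_castSucc, conj_trivial]
    ring_nf
  have hsymm : ∀ c c', ⟪S c, F c'⟫_ℝ = ⟪F c, S c'⟫_ℝ := by
    intro c c'
    simp only [F, S, Fintype.linearCombination_apply, sum_inner, inner_sum, inner_smul_left,
      inner_smul_right, hv, Fin.val_succ, Fin.val_castSucc, add_comm, add_left_comm]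
  obtain ⟨A, hA, hA1, hAF⟩ := F.exists_isSymmetric_compression S hle hsymm
  have hF : ∀ m : Fin d, F (Pi.single m 1) = v m.castSucc := by
    intro m; simp [F]
  have hS : ∀ m : Fin d, S (Pi.single m 1) = v m.succ := by
    intro m; simp [S]
  let w : Fin d → LinearMap.range F := fun m => F.rangeRestrict (Pi.single m 1)
  have hAk : ∀ (k : ℕ) (hk : k < d), (A ^ k) (w ⟨0, hd⟩) = w ⟨k, hk⟩ := by
    intro k
    induction k with
    | zero => intro hk; simp
    | succ k ih =>
      intro hk
      rw [pow_succ', Module.End.mul_apply, ih (by lia), hAF, hS,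
        ← Submodule.orthogonalProjectionOnto_mem_subspace_eq_self (w ⟨k + 1, hk⟩)]
      congr 1
      exact (hF ⟨k + 1, hk⟩).symm
  obtain ⟨ν, hν, hmom⟩ := hA.exists_spectral_measure hA1 (w ⟨0, hd⟩)
  refine ⟨ν, hν, fun k hk => ?_⟩
  rw [hmom]
  rcases k with _ | k
  · rw [hAk 0 hd, Submodule.coe_inner]
    simp only [w, LinearMap.codRestrict_apply, hF, hv]
    simp
  · rw [pow_succ', Module.End.mul_apply, hAk k (by lia), hAF, hS,
      Submodule.inner_orthogonalProjectionOnto_eq_of_mem_right]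
    simp [w, hF, hv]

/-- Proposition A.7 (surjectivity of the moment map): every feasible tuple of moments in
`F_L` is realized by a sum of `L` product measures with factors supported in `[-1,1]`,
of total mass `1` on `[-1,1]^D`. -/
theorem statement4 (D d L : ℕ) (hD : 1 ≤ D) (hd : 1 ≤ d) (hL : 1 ≤ L)
    (μ : Fin L → Fin D → ℕ → ℝ) (hμ : Feasible D d L μ) :
    ∃ ν : Fin L → Fin D → FiniteMeasure ℝ,
      (∀ l i, (ν l i : Measure ℝ) (Set.Icc (-1 : ℝ) 1)ᶜ = 0) ∧
      (∑ l, Measure.pi fun i => (ν l i : Measure ℝ)) (cube D) = 1 ∧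
      ∀ n : Fin D → ℕ, (∀ i, n i ≤ d) →
        ∫ x, (∏ i, x i ^ n i) ∂(∑ l, Measure.pi fun i => (ν l i : Measure ℝ)) =
          ∑ l, ∏ i, μ l i (n i) := by
  obtain ⟨hM, hLoc, hsum⟩ := hμ
  choose ν hν hmom using fun l i => exists_finiteMeasure_moments hd (hM l i) (hLoc l i)
  have hintegrable : ∀ l i (k : ℕ), Integrable (fun x : ℝ => x ^ k) (ν l i : Measure ℝ) := by
    intro l i k
    refine Integrable.of_bound (by fun_prop) 1 ?_
    filter_upwards [mem_ae_iff.mpr (hν l i)] with x hx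
    rw [norm_pow, Real.norm_eq_abs]
    exact pow_le_one₀ (abs_nonneg x) (abs_le.mpr hx)
  have hmass : ∀ l i, (ν l i : Measure ℝ) (Set.Icc (-1) 1) = ENNReal.ofReal (μ l i 0) := by
    intro l i
    rw [measure_of_measure_compl_eq_zero (hν l i), ← hmom l i 0 (Nat.zero_le d)]
    simp
  have hnonneg : ∀ l i, 0 ≤ μ l i 0 := by
    intro l i
    simpa [momentMatrix] using (hM l i).diag_nonneg (i := 0)
  refine ⟨ν, hν, ?_, fun n hn => ?_⟩
  · simp only [Measure.coe_finsetSum, Finset.sum_apply, cube, Measure.pi_pi, hmass]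
    rw [← ENNReal.ofReal_one, ← hsum,
      ENNReal.ofReal_sum_of_nonneg fun l _ => Finset.prod_nonneg fun i _ => hnonneg l i]
    exact Finset.sum_congr rfl fun l _ =>
      (ENNReal.ofReal_prod_of_nonneg fun i _ => hnonneg l i).symm
  · rw [integral_finsetSum_measure fun l _ => Integrable.fintype_prod fun i => hintegrable l i (n i)]
    refine Finset.sum_congr rfl fun l _ => ?_
    rw [integral_fintype_prod_eq_prod (fun i (x : ℝ) => x ^ n i)]
    exact Finset.prod_congr rfl fun i _ => hmom l i (n i) (hn i)
end

section
/- (Appendix B tail-mass lemma for measures with bounded moments.) Let L, d ∈ ℕ with 2L > d, and let ν be a finite positive Borel measure on ℝ such that x ↦ |x|^{2L} is ν-integrable and such that the moments μ_k = ∫ x^k dν(x) satisfy |μ_k| ≤ 1 for all 0 ≤ k ≤ 2L. Let p(x) = Σ_{j=0}^d p_j x^j be a real polynomial of degree at most d. Then for every α > 0, | ∫_{{x : |x| > 1+α}} p(x) dν(x) | ≤ (d+1) · (max_{0≤j≤d} |p_j|) / (α (1+α)^{2L−(d+1)}). Consequently, ∫ p dν = ∫_{[-1-α, 1+α]} p dν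 + ε(α, L) with |ε(α, L)| bounded by the same quantity. -/
open MeasureTheory

/-- Lower powers are integrable against a finite measure when a higher absolute power is. -/
lemma integrable_pow_of_le {ν : Measure ℝ} [IsFiniteMeasure ν] {n j : ℕ} (hj : j ≤ n)
    (hint : Integrable (fun x => |x| ^ n) ν) : Integrable (fun x : ℝ => x ^ j) ν := by
  refine Integrable.mono' ((integrable_const (1 : ℝ)).add hint) (by fun_prop) ?_
  filter_upwards with x
  simp only [norm_pow, Real.norm_eq_abs, Pi.add_apply]
  rcases le_total |x| 1 with h | h
  · linarith [pow_le_one₀ (n := j) (abs_nonneg x) h, pow_nonneg (abs_nonneg x) n]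
  · linarith [pow_le_pow_right₀ h hj]

/-- A polynomial with coefficients bounded by `M` is at most `(d + 1) M |x| ^ d` for `|x| ≥ 1`. -/
lemma abs_sum_mul_pow_le {d : ℕ} {q : ℕ → ℝ} {M x : ℝ}
    (hq : ∀ j ∈ Finset.range (d + 1), |q j| ≤ M) (hx : 1 ≤ |x|) :
    |∑ j ∈ Finset.range (d + 1), q j * x ^ j| ≤ (d + 1 : ℝ) * M * |x| ^ d := by
  have hM : 0 ≤ M := (abs_nonneg _).trans (hq 0 (by simp))
  calc |∑ j ∈ Finset.range (d + 1), q j * x ^ j|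
      ≤ ∑ j ∈ Finset.range (d + 1), |q j * x ^ j| := Finset.abs_sum_le_sum_abs _ _
    _ ≤ ∑ _j ∈ Finset.range (d + 1), M * |x| ^ d := by
        refine Finset.sum_le_sum fun j hj => ?_
        rw [abs_mul, abs_pow]
        exact mul_le_mul (hq j hj)
          (pow_le_pow_right₀ hx (Nat.lt_succ_iff.mp (Finset.mem_range.mp hj)))
          (by positivity) hM
    _ = (d + 1 : ℝ) * M * |x| ^ d := by
        simp [mul_assoc]

/-- Markov-type tail bound for polynomials: an absolute moment of order `n ≥ d` that is at most
`1` controls the integral over `{R < |x|}` of a polynomial of degree at most `d`. -/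
lemma abs_setIntegral_sum_mul_pow_le {ν : Measure ℝ} {n d : ℕ} (hd : d ≤ n)
    (hint : Integrable (fun x => |x| ^ n) ν) (hmom : ∫ x, |x| ^ n ∂ν ≤ 1)
    {q : ℕ → ℝ} {M R : ℝ} (hq : ∀ j ∈ Finset.range (d + 1), |q j| ≤ M) (hR : 1 ≤ R) :
    |∫ x in {x : ℝ | R < |x|}, (∑ j ∈ Finset.range (d + 1), q j * x ^ j) ∂ν| ≤
      (d + 1 : ℝ) * M / R ^ (n - d) := by
  have hM : 0 ≤ M := (abs_nonneg _).trans (hq 0 (by simp))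
  have hC : 0 ≤ (d + 1 : ℝ) * M / R ^ (n - d) := by positivity
  have hS : MeasurableSet {x : ℝ | R < |x|} :=
    measurableSet_lt measurable_const continuous_abs.measurable
  have hle : ∀ᵐ x ∂ν.restrict {x : ℝ | R < |x|},
      ‖∑ j ∈ Finset.range (d + 1), q j * x ^ j‖ ≤
        (d + 1 : ℝ) * M / R ^ (n - d) * |x| ^ n := by
    filter_upwards [ae_restrict_mem hS] with x (hx : R < |x|)
    refine (abs_sum_mul_pow_le hq (hR.trans hx.le)).trans ?_
    rw [div_mul_eq_mul_div, le_div_iff₀ (by positivity), mul_assoc]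
    gcongr
    calc |x| ^ d * R ^ (n - d) ≤ |x| ^ d * |x| ^ (n - d) := by gcongr
      _ = |x| ^ n := by rw [← pow_add, Nat.add_sub_cancel' hd]
  calc |∫ x in {x : ℝ | R < |x|}, (∑ j ∈ Finset.range (d + 1), q j * x ^ j) ∂ν|
      ≤ ∫ x in {x : ℝ | R < |x|}, (d + 1 : ℝ) * M / R ^ (n - d) * |x| ^ n ∂ν :=
        norm_integral_le_of_norm_le (hint.const_mul _).integrableOn hle
    _ ≤ ∫ x, (d + 1 : ℝ) * M / R ^ (n - d) * |x| ^ n ∂ν :=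
        setIntegral_le_integral (hint.const_mul _)
          (Filter.Eventually.of_forall fun x => by positivity)
    _ ≤ (d + 1 : ℝ) * M / R ^ (n - d) := by
        rw [integral_const_mul]
        exact mul_le_of_le_one_right hC hmom

/-- Appendix B tail-mass lemma: if `ν` is a finite positive Borel measure on `ℝ` whose
moments up to order `2L` are bounded by `1` in absolute value, and `p` is a polynomial
of degree at most `d < 2L` with coefficients `q_j`, then for any `α > 0` the integral of
`p` over `{|x| > 1+α}` is bounded by `(d+1)·max_j |q_j| / (α (1+α)^{2L-(d+1)})`;
consequently `∫ p dν` equals `∫_{[-1-α,1+α]} p dν` up to an error of the same size. -/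
theorem statement13 (L d : ℕ) (hLd : d < 2 * L)
    (ν : Measure ℝ) [IsFiniteMeasure ν]
    (hint : Integrable (fun x => |x| ^ (2 * L)) ν)
    (hmom : ∀ k ≤ 2 * L, |∫ x, x ^ k ∂ν| ≤ 1)
    (q : ℕ → ℝ) (α : ℝ) (hα : 0 < α) :
    |∫ x in {x : ℝ | 1 + α < |x|}, (∑ j ∈ Finset.range (d+1), q j * x ^ j) ∂ν| ≤
      (d + 1 : ℝ) *
        ((Finset.range (d+1)).sup' (Finset.nonempty_range_iff.mpr (Nat.succ_ne_zero d))
          fun j => |q j|) / (α * (1 + α) ^ (2 * L - (d + 1))) ∧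
    |(∫ x, (∑ j ∈ Finset.range (d+1), q j * x ^ j) ∂ν) -
        ∫ x in Set.Icc (-1 - α) (1 + α), (∑ j ∈ Finset.range (d+1), q j * x ^ j) ∂ν| ≤
      (d + 1 : ℝ) *
        ((Finset.range (d+1)).sup' (Finset.nonempty_range_iff.mpr (Nat.succ_ne_zero d))
          fun j => |q j|) / (α * (1 + α) ^ (2 * L - (d + 1))) := by
  set M := (Finset.range (d+1)).sup' (Finset.nonempty_range_iff.mpr (Nat.succ_ne_zero d))
    fun j => |q j|
  have hq : ∀ j ∈ Finset.range (d + 1), |q j| ≤ M := fun j hj =>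
    Finset.le_sup' (fun j => |q j|) hj
  have hM : 0 ≤ M := (abs_nonneg _).trans (hq 0 (by simp))
  have habs : ∫ x, |x| ^ (2 * L) ∂ν ≤ 1 := by
    simp only [(even_two_mul L).pow_abs]
    exact (le_abs_self _).trans (hmom _ le_rfl)
  have htail : |∫ x in {x : ℝ | 1 + α < |x|}, (∑ j ∈ Finset.range (d+1), q j * x ^ j) ∂ν| ≤
      (d + 1 : ℝ) * M / (α * (1 + α) ^ (2 * L - (d + 1))) := by
    refine (abs_setIntegral_sum_mul_pow_le hLd.le hint habs hq (by linarith)).trans ?_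
    rw [show 2 * L - d = (2 * L - (d + 1)) + 1 by omega, pow_succ']
    gcongr
    linarith
  refine ⟨htail, ?_⟩
  have hp : Integrable (fun x : ℝ => ∑ j ∈ Finset.range (d+1), q j * x ^ j) ν :=
    integrable_finsetSum _ fun j hj =>
      (integrable_pow_of_le (by have := Finset.mem_range.mp hj; omega) hint).const_mul _
  have hcompl : {x : ℝ | 1 + α < |x|} = (Set.Icc (-1 - α) (1 + α))ᶜ := by
    ext x
    rw [Set.mem_compl_iff, Set.mem_Icc, Set.mem_ofPred_eq, ← not_le, abs_le, neg_add']
  rwa [← setIntegral_compl measurableSet_Icc hp, ← hcompl]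
end

section
/- (Theorem B.1, representation of polynomials nonnegative on [-1,1] (Powers–Reznick, from Fekete).) Let p be a real polynomial in one variable of degree d with p(x) ≥ 0 for all x ∈ [-1,1]. Then there exist real polynomials f and g, with deg f ≤ d and deg g ≤ d − 1, such that p(x) = (f(x))² + (1 − x²)·(g(x))² for all x ∈ ℝ. -/
open Polynomial in
/-- `p = f² + (1 - X²) g²` with `deg f ≤ n` and `deg (X g) ≤ n`. -/
def HasFeketeRep (n : ℕ) (p : ℝ[X]) : Prop :=
  ∃ f g : ℝ[X], f.natDegree ≤ n ∧ (X * g).natDegree ≤ n ∧ p = f ^ 2 + (1 - X ^ 2) * g ^ 2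

namespace HasFeketeRep

open Polynomial

theorem mul {m n : ℕ} {p q : ℝ[X]} (hp : HasFeketeRep m p) (hq : HasFeketeRep n q) :
    HasFeketeRep (m + n) (p * q) := by
  obtain ⟨f₁, g₁, hf₁, hg₁, rfl⟩ := hp
  obtain ⟨f₂, g₂, hf₂, hg₂, rfl⟩ := hq
  have mul_le {u v : ℝ[X]} (hu : u.natDegree ≤ m) (hv : v.natDegree ≤ n) :
      (u * v).natDegree ≤ m + n := natDegree_mul_le_of_le hu hv
  have hX (g : ℝ[X]) : g.natDegree ≤ (X * g).natDegree := by
    by_cases h : g = 0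
    · simp [h]
    · simp [natDegree_X_mul h]
  have sub_le {u v : ℝ[X]} (hu : u.natDegree ≤ m + n) (hv : v.natDegree ≤ m + n) :
      (u - v).natDegree ≤ m + n := (natDegree_sub_le_of_le hu hv).trans (max_self _).le
  refine ⟨f₁ * f₂ - (g₁ * g₂ - (X * g₁) * (X * g₂)), f₁ * g₂ + g₁ * f₂, ?_, ?_, by ring⟩
  · exact sub_le (mul_le hf₁ hf₂)
      (sub_le (mul_le ((hX g₁).trans hg₁) ((hX g₂).trans hg₂)) (mul_le hg₁ hg₂))
  · have : X * (f₁ * g₂ + g₁ * f₂) = f₁ * (X * g₂) + (X * g₁) * f₂ := by ring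
    rw [this]
    exact natDegree_add_le_of_degree_le (mul_le hf₁ hg₂) (mul_le hg₁ hf₂)

theorem const {c : ℝ} (hc : 0 ≤ c) : HasFeketeRep 0 (C c) :=
  ⟨C √c, 0, by simp, by simp, by simp [← C_pow, Real.sq_sqrt hc]⟩

theorem sq_X_sub_C (r : ℝ) : HasFeketeRep 2 ((X - C r) ^ 2) :=
  ⟨X - C r, 0, by simp, by simp, by ring⟩

theorem exists_mul_eq_one_sq_add_sq_eq {c : ℝ} (hc : 1 ≤ c) :
    ∃ α β : ℝ, 2 * α * β = 1 ∧ α ^ 2 + β ^ 2 = c := by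
  have h₁ := Real.sq_sqrt (show 0 ≤ c + 1 by linarith)
  have h₂ := Real.sq_sqrt (show 0 ≤ c - 1 by linarith)
  exact ⟨(√(c + 1) + √(c - 1)) / 2, (√(c + 1) - √(c - 1)) / 2, by linarith, by linarith⟩

theorem C_sub_X {c : ℝ} (hc : 1 ≤ c) : HasFeketeRep 1 (C c - X) := by
  obtain ⟨α, β, h₁, h₂⟩ := exists_mul_eq_one_sq_add_sq_eq hc
  refine ⟨C α * X - C β, C α, by compute_degree, by compute_degree, ?_⟩
  have h₁' := congrArg (C : ℝ → ℝ[X]) h₁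
  have h₂' := congrArg (C : ℝ → ℝ[X]) h₂
  simp only [map_mul, map_add, map_pow, map_one, map_ofNat] at h₁' h₂'
  linear_combination X * h₁' - h₂'

theorem X_add_C {c : ℝ} (hc : 1 ≤ c) : HasFeketeRep 1 (X + C c) := by
  obtain ⟨α, β, h₁, h₂⟩ := exists_mul_eq_one_sq_add_sq_eq hc
  refine ⟨C α * X + C β, C α, by compute_degree, by compute_degree, ?_⟩
  have h₁' := congrArg (C : ℝ → ℝ[X]) h₁
  have h₂' := congrArg (C : ℝ → ℝ[X]) h₂
  simp only [map_mul, map_add, map_pow, map_one, map_ofNat] at h₁' h₂'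
  linear_combination - X * h₁' - h₂'

theorem sq_X_sub_C_add_sq (a b : ℝ) : HasFeketeRep 2 ((X - C a) ^ 2 + C (b ^ 2)) := by
  obtain ⟨v, ⟨hv₀, -⟩, hv⟩ : ∃ v ∈ Set.Icc (0 : ℝ) 1,
      (1 - v) ^ 2 * (1 + v) ^ 2 + 16 * a ^ 2 * v ^ 2
        - 4 * v * (1 + v) ^ 2 * (a ^ 2 + b ^ 2) = 0 := by
    refine intermediate_value_Icc' zero_le_one (f := fun v : ℝ =>
      (1 - v) ^ 2 * (1 + v) ^ 2 + 16 * a ^ 2 * v ^ 2 - 4 * v * (1 + v) ^ 2 * (a ^ 2 + b ^ 2))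
      (by fun_prop) ⟨?_, by norm_num⟩
    nlinarith [sq_nonneg b]
  have hv₁ : 0 < v := hv₀.lt_of_ne (by rintro rfl; norm_num at hv)
  obtain ⟨s, hs⟩ : ∃ s : ℝ, 4 * v * s ^ 2 = 1 :=
    ⟨√(1 / (4 * v)), by rw [Real.sq_sqrt (by positivity)]; field_simp⟩
  obtain ⟨u, hu⟩ : ∃ u : ℝ, u * (1 + v) = -(4 * a * v) :=
    ⟨-(4 * a * v) / (1 + v), by field_simp⟩
  have hlin : u * (1 + v) * s ^ 2 = -a := by
    linear_combination s ^ 2 * hu - a * hs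
  have hconst : ((1 - v) ^ 2 + u ^ 2) * s ^ 2 = a ^ 2 + b ^ 2 := by
    have h : (1 + v) ^ 2 * ((1 - v) ^ 2 + u ^ 2) = (1 + v) ^ 2 * (4 * v * (a ^ 2 + b ^ 2)) := by
      linear_combination hv + (u * (1 + v) - 4 * a * v) * hu
    have h' := mul_left_cancel₀ (by positivity) h
    linear_combination s ^ 2 * h' + (a ^ 2 + b ^ 2) * hs
  refine ⟨C s * (C 2 * X ^ 2 + C u * X + C (v - 1)), C s * (C 2 * X + C u),
    by compute_degree, by compute_degree, ?_⟩
  have h₁ := congrArg (C : ℝ → ℝ[X]) hs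
  have h₂ := congrArg (C : ℝ → ℝ[X]) hlin
  have h₃ := congrArg (C : ℝ → ℝ[X]) hconst
  simp only [map_mul, map_add, map_sub, map_neg, map_pow, map_one, map_ofNat] at h₁ h₂ h₃ ⊢
  linear_combination - X ^ 2 * h₁ - 2 * X * h₂ - h₃

theorem eval_nonneg_Icc_of_Ioo {q : ℝ[X]} {a b : ℝ} (hab : a < b)
    (h : ∀ x ∈ Set.Ioo a b, 0 ≤ q.eval x) : ∀ x ∈ Set.Icc a b, 0 ≤ q.eval x := by
  rw [← closure_Ioo hab.ne]
  exact (isClosed_le continuous_const q.continuous).closure_subset_iff.2 h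

theorem of_nonneg (p : ℝ[X]) (hp : ∀ x ∈ Set.Icc (-1 : ℝ) 1, 0 ≤ p.eval x) :
    HasFeketeRep p.natDegree p := by
  induction hn : p.natDegree using Nat.strong_induction_on generalizing p with
  | _ n ih =>
  obtain rfl | hn₀ := n.eq_zero_or_pos
  · obtain ⟨c, rfl⟩ := natDegree_eq_zero.1 hn
    exact const (by simpa using hp 0)
  have hp₀ : p ≠ 0 := by rintro rfl; simp at hn; omega
  have step {k : ℕ} {u q : ℝ[X]} (hk : 0 < k) (hu : HasFeketeRep k u) (hd : u.natDegree = k)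
      (h : p = u * q) (hq : ∀ x ∈ Set.Icc (-1 : ℝ) 1, 0 ≤ q.eval x) : HasFeketeRep n p := by
    have hu₀ : u ≠ 0 := by rintro rfl; simp [h] at hp₀
    have hq₀ : q ≠ 0 := by rintro rfl; simp [h] at hp₀
    have hdeg : k + q.natDegree = n := by rw [← hn, h, natDegree_mul hu₀ hq₀, hd]
    have := hu.mul (ih q.natDegree (by omega) q hq rfl)
    rwa [hdeg, ← h] at this
  by_cases hroot : ∃ r, p.IsRoot r
  · obtain ⟨r, hr⟩ := hroot
    obtain ⟨q, rfl⟩ := dvd_iff_isRoot.2 hr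
    have hp' : ∀ x ∈ Set.Icc (-1 : ℝ) 1, 0 ≤ (x - r) * q.eval x := by simpa using hp
    have hright : ∀ x ∈ Set.Icc (-1 : ℝ) 1, r < x → 0 ≤ q.eval x := fun x hx h =>
      nonneg_of_mul_nonneg_right (hp' x hx) (sub_pos.2 h)
    have hleft : ∀ x ∈ Set.Icc (-1 : ℝ) 1, x < r → 0 ≤ (-q).eval x := fun x hx h =>
      nonneg_of_mul_nonneg_right (a := r - x)
        (by rw [eval_neg]; linarith [hp' x hx]) (sub_pos.2 h)
    rcases le_or_gt 1 r with h₁ | h₁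
    · refine step one_pos (C_sub_X h₁) ?_ (q := -q) (by ring)
        (eval_nonneg_Icc_of_Ioo (by norm_num) fun x hx =>
          hleft x (Set.Ioo_subset_Icc_self hx) (hx.2.trans_le h₁))
      rw [← neg_sub, natDegree_neg, natDegree_X_sub_C]
    rcases le_or_gt r (-1) with h₂ | h₂
    · refine step one_pos (X_add_C (c := -r) (by linarith)) (natDegree_X_add_C _) (q := q)
        (by rw [C_neg, sub_eq_add_neg])
        (eval_nonneg_Icc_of_Ioo (by norm_num) fun x hx =>
          hright x (Set.Ioo_subset_Icc_self hx) (h₂.trans_lt hx.1))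
    have hq₁ : 0 ≤ q.eval r := eval_nonneg_Icc_of_Ioo h₁
      (fun x hx => hright x ⟨by linarith [hx.1], hx.2.le⟩ hx.1) r ⟨le_rfl, h₁.le⟩
    have hq₂ : 0 ≤ (-q).eval r := eval_nonneg_Icc_of_Ioo h₂
      (fun x hx => hleft x ⟨hx.1.le, by linarith [hx.2]⟩ hx.2) r ⟨h₂.le, le_rfl⟩
    rw [eval_neg] at hq₂
    obtain ⟨t, rfl⟩ := dvd_iff_isRoot.2 (show q.IsRoot r from le_antisymm (by linarith) hq₁)
    refine step two_pos (sq_X_sub_C r) (by simp) (q := t) (by ring) fun x hx => ?_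
    have ht : ∀ y ∈ Set.Icc (-1 : ℝ) 1, y ≠ r → 0 ≤ t.eval y := fun y hy h =>
      nonneg_of_mul_nonneg_right (a := (y - r) ^ 2)
        (by have := hp' y hy; simp only [eval_mul, eval_sub, eval_X, eval_C] at this; linarith)
        (by have := sub_ne_zero.2 h; positivity)
    rcases le_total x r with h | h
    · exact eval_nonneg_Icc_of_Ioo h₂
        (fun y hy => ht y ⟨hy.1.le, by linarith [hy.2]⟩ hy.2.ne) x ⟨hx.1, h⟩
    · exact eval_nonneg_Icc_of_Ioo h₁
        (fun y hy => ht y ⟨by linarith [hy.1], hy.2.le⟩ hy.1.ne') x ⟨h, hx.2⟩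
  · obtain ⟨z, hz⟩ := IsAlgClosed.exists_aeval_eq_zero ℂ p
      (natDegree_pos_iff_degree_pos.1 (hn ▸ hn₀)).ne'
    have him : z.im ≠ 0 := by
      intro him
      refine hroot ⟨z.re, ?_⟩
      have hz' : z = algebraMap ℝ ℂ z.re := Complex.ext (by simp) (by simp [him])
      rw [hz', aeval_algebraMap_apply] at hz
      simpa using hz
    have hquad : X ^ 2 - C (2 * z.re) * X + C (‖z‖ ^ 2)
        = (X - C z.re) ^ 2 + C (z.im ^ 2) := by
      rw [Complex.sq_norm, Complex.normSq_apply]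
      simp only [map_mul, map_add, map_pow, map_ofNat]
      ring
    obtain ⟨q, hq⟩ := quadratic_dvd_of_aeval_eq_zero_im_ne_zero p hz him
    rw [hquad] at hq
    refine step two_pos (sq_X_sub_C_add_sq z.re z.im) ?_ hq fun x hx => ?_
    · rw [natDegree_add_C]
      simp
    · have h := hp x hx
      rw [hq, eval_mul] at h
      refine nonneg_of_mul_nonneg_right h ?_
      simp only [eval_add, eval_pow, eval_sub, eval_X, eval_C]
      positivity

end HasFeketeRep

/-- Theorem B.1 (Powers–Reznick, from Fekete): a real polynomial `p` of degree `d`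
that is nonnegative on `[-1,1]` can be written as `p = f² + (1 - x²)·g²`, where
`deg f ≤ d` and `deg g ≤ d - 1`. -/
theorem statement15 (p : Polynomial ℝ)
    (hp : ∀ x ∈ Set.Icc (-1 : ℝ) 1, 0 ≤ p.eval x) :
    ∃ f g : Polynomial ℝ, f.natDegree ≤ p.natDegree ∧ g.natDegree ≤ p.natDegree - 1 ∧
      p = f ^ 2 + (1 - Polynomial.X ^ 2) * g ^ 2 := by
  obtain ⟨f, g, hf, hg, h⟩ := HasFeketeRep.of_nonneg p hp
  refine ⟨f, g, hf, ?_, h⟩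
  by_cases hg₀ : g = 0
  · simp [hg₀]
  · rw [Polynomial.natDegree_X_mul hg₀] at hg
    omega
end
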